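/- Let 0 < ρ₀ < 1 and λ₀ > 0. Then there exists a number T₀ = T₀(λ₀, ρ₀) > 0 such that for all t₀ ≥ T₀ and every constant c ≥ 0, the function U(t₀, ρ) = c · E_ρ(−λ₀ t₀^ρ) is monotonically decreasing with respect to ρ on the interval [ρ₀, 1), and strictly decreasing when c > 0. -/

import Mathlib

open Set Real

/-- The Mittag-Leffler function `E_ρ(z) = ∑_{k=0}^∞ z^k / Γ(ρk + 1)`. -/
noncomputable def mittagLeffler (ρ z : ℝ) : ℝ := ∑' k : ℕ, z ^ k / Real.Gamma (ρ * k + 1)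

/-!
The value `E_ρ(-x)` is the integral of `e^w w^(ρ-1) / (w^ρ + x)` over a Hankel contour. Expanding
the kernel to first order in `w^ρ / x` and using Hankel's formula for `1 / Γ` gives
`E_ρ(-x) = 1 / (x Γ(1 - ρ)) - R(ρ, x)`, where `R` is again a contour integral. Now put
`x = λ t^ρ` and differentiate in `ρ`. Since `Γ' ≤ (1 - Γ) Γ` on `(0, 1]`, the leading term has
derivative at most `-1 / x` as soon as `log t ≥ 1`, although its factor `1 / Γ(1 - ρ)` vanishes as
`ρ → 1`; the derivative of `R` is `O((1 + log t) / x²)` uniformly in `ρ`. As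
`x ≥ λ t^ρ₀` outgrows `1 + log t`, the leading term wins for large `t`.
-/

open MeasureTheory Filter Topology

section LaplaceTransform

lemma integrableOn_cpow_mul_exp_neg_mul_Ioi {a p : ℂ} (ha : 0 < a.re) (hp : 0 < p.re) :
    IntegrableOn (fun t : ℝ => (t : ℂ) ^ (a - 1) * Complex.exp (-(p * t))) (Ioi 0) := by
  have hdom : IntegrableOn (fun t : ℝ => t ^ (a.re - 1) * Real.exp (-p.re * t ^ (1 : ℝ))) (Ioi 0) :=
    integrableOn_rpow_mul_exp_neg_mul_rpow (by linarith) one_pos hp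
  refine hdom.mono' (by fun_prop) (ae_restrict_of_forall_mem measurableSet_Ioi fun t ht => ?_)
  rw [norm_mul, Complex.norm_cpow_eq_rpow_re_of_pos ht, Complex.norm_exp]
  simp

lemma hasDerivAt_integral_cpow_mul_exp_neg_mul_Ioi {a p : ℂ} (ha : 0 < a.re) (hp : 0 < p.re) :
    HasDerivAt (fun q : ℂ => ∫ t : ℝ in Ioi 0, (t : ℂ) ^ (a - 1) * Complex.exp (-(q * t)))
      (∫ t : ℝ in Ioi 0, (t : ℂ) ^ (a - 1) * (Complex.exp (-(p * t)) * -t)) p := by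
  refine (hasDerivAt_integral_of_dominated_loc_of_deriv_le (μ := volume.restrict (Ioi 0))
    (F := fun (q : ℂ) (t : ℝ) => (t : ℂ) ^ (a - 1) * Complex.exp (-(q * t)))
    (F' := fun (q : ℂ) (t : ℝ) => (t : ℂ) ^ (a - 1) * (Complex.exp (-(q * t)) * -t))
    (s := {q : ℂ | p.re / 2 < q.re})
    (bound := fun t => t ^ a.re * Real.exp (-(p.re / 2) * t ^ (1 : ℝ)))
    ((isOpen_lt continuous_const Complex.continuous_re).mem_nhds (half_lt_self hp))
    (Eventually.of_forall fun q => by fun_prop)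
    (integrableOn_cpow_mul_exp_neg_mul_Ioi ha hp) (by fun_prop)
    (ae_restrict_of_forall_mem measurableSet_Ioi fun t ht q hq => ?_)
    (integrableOn_rpow_mul_exp_neg_mul_rpow (by linarith) one_pos (half_pos hp))
    (Eventually.of_forall fun t q _ => ?_)).2
  · have ht : 0 < t := ht
    have hq : p.re / 2 < q.re := hq
    have hexp : ‖Complex.exp (-(q * t))‖ ≤ Real.exp (-(p.re / 2) * t) := by
      rw [Complex.norm_exp, Real.exp_le_exp]
      simp only [Complex.neg_re, Complex.re_mul_ofReal]
      nlinarith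
    have hpow : t ^ a.re = t ^ (a.re - 1) * t := by
      rw [← Real.rpow_add_one ht.ne', sub_add_cancel]
    rw [norm_mul, norm_mul, Complex.norm_cpow_eq_rpow_re_of_pos ht, norm_neg, Complex.norm_real,
      Real.norm_of_nonneg ht.le, Real.rpow_one, hpow, Complex.sub_re, Complex.one_re]
    calc t ^ (a.re - 1) * (‖Complex.exp (-(q * t))‖ * t)
        ≤ t ^ (a.re - 1) * (Real.exp (-(p.re / 2) * t) * t) := by gcongr
      _ = t ^ (a.re - 1) * t * Real.exp (-(p.re / 2) * t) := by ring
  · exact ((((hasDerivAt_id q).mul_const (t : ℂ)).neg.cexp).const_mul _).congr_deriv (by simp)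

-- Both sides are holomorphic in `p` on the right half-plane and agree on the positive reals.
lemma integral_cpow_mul_exp_neg_mul_Ioi_of_re_pos {a p : ℂ} (ha : 0 < a.re) (hp : 0 < p.re) :
    ∫ t : ℝ in Ioi 0, (t : ℂ) ^ (a - 1) * Complex.exp (-(p * t)) =
      (1 / p) ^ a * Complex.Gamma a := by
  have hopen : IsOpen {q : ℂ | 0 < q.re} := isOpen_lt continuous_const Complex.continuous_re
  have hleft : AnalyticOnNhd ℂ (fun q : ℂ =>
      ∫ t : ℝ in Ioi 0, (t : ℂ) ^ (a - 1) * Complex.exp (-(q * t))) {q | 0 < q.re} :=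
    DifferentiableOn.analyticOnNhd (fun q hq => (hasDerivAt_integral_cpow_mul_exp_neg_mul_Ioi ha
      hq).differentiableAt.differentiableWithinAt) hopen
  have hright : AnalyticOnNhd ℂ (fun q : ℂ => (1 / q) ^ a * Complex.Gamma a) {q | 0 < q.re} := by
    refine DifferentiableOn.analyticOnNhd (fun q hq => ?_) hopen
    have hq0 : q ≠ 0 := by rintro rfl; simp at hq
    have hslit : 1 / q ∈ Complex.slitPlane := by
      rw [one_div, Complex.mem_slitPlane_iff, Complex.inv_re]
      exact Or.inl (div_pos hq (Complex.normSq_pos.2 hq0))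
    exact ((((differentiableAt_const 1).div differentiableAt_id hq0).cpow_const hslit).mul_const
      _).differentiableWithinAt
  have hreal : ∃ᶠ q in 𝓝[≠] (1 : ℂ),
      ∫ t : ℝ in Ioi 0, (t : ℂ) ^ (a - 1) * Complex.exp (-(q * t)) =
        (1 / q) ^ a * Complex.Gamma a := by
    have hofReal : Tendsto Complex.ofReal (𝓝[≠] 1) (𝓝[≠] (1 : ℂ)) :=
      tendsto_nhdsWithin_of_tendsto_nhds_of_eventually_within _
        (Complex.continuous_ofReal.tendsto' 1 1 (by simp) |>.mono_left nhdsWithin_le_nhds)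
        (by filter_upwards [self_mem_nhdsWithin] with q hq using by simpa using hq)
    refine hofReal.frequently (Eventually.frequently ?_)
    filter_upwards [nhdsWithin_le_nhds (Ioi_mem_nhds one_pos)] with q hq
    exact Complex.integral_cpow_mul_exp_neg_mul_Ioi ha hq
  exact hleft.eqOn_of_preconnected_of_frequently_eq hright
    (convex_halfSpace_re_gt 0).isPreconnected (by simp) hreal hp

end LaplaceTransform

section GammaBounds

lemma differentiableAt_Gamma_of_pos {y : ℝ} (hy : 0 < y) : DifferentiableAt ℝ Real.Gamma y :=
  Real.differentiableOn_Gamma_Ioi.differentiableAt (Ioi_mem_nhds hy)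

lemma Gamma_le_one_of_mem_Icc {y : ℝ} (hy : y ∈ Icc (1 : ℝ) 2) : Real.Gamma y ≤ 1 := by
  have hconv := Real.convexOn_Gamma.le_max_of_mem_Icc (mem_Ioi.2 one_pos) (mem_Ioi.2 two_pos) hy
  rwa [Real.Gamma_one, Real.Gamma_two, max_self] at hconv

lemma deriv_Gamma_le_log_mul_Gamma {y : ℝ} (hy : 0 < y) :
    deriv Real.Gamma y ≤ Real.log y * Real.Gamma y := by
  have hΓ : 0 < Real.Gamma y := Real.Gamma_pos_of_pos hy
  have hderiv : HasDerivAt (Real.log ∘ Real.Gamma) (deriv Real.Gamma y / Real.Gamma y) y :=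
    (differentiableAt_Gamma_of_pos hy).hasDerivAt.log hΓ.ne'
  have hslope := Real.convexOn_log_Gamma.le_slope_of_hasDerivAt hy (by positivity : 0 < y + 1)
    (lt_add_one y) hderiv
  rw [slope_def_field, Function.comp_apply, Function.comp_apply, Real.Gamma_add_one hy.ne',
    Real.log_mul hy.ne' hΓ.ne', add_sub_cancel_right, add_sub_cancel_left, div_one] at hslope
  exact (div_le_iff₀ hΓ).1 hslope

lemma deriv_Gamma_add_one {y : ℝ} (hy : 0 < y) :
    deriv Real.Gamma (y + 1) = Real.Gamma y + y * deriv Real.Gamma y := by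
  have hshift : HasDerivAt (fun z => Real.Gamma (z + 1)) (deriv Real.Gamma (y + 1)) y :=
    (differentiableAt_Gamma_of_pos (by positivity)).hasDerivAt.comp_add_const y 1
  have hmul : HasDerivAt (fun z => z * Real.Gamma z)
      (1 * Real.Gamma y + y * deriv Real.Gamma y) y :=
    (hasDerivAt_id y).mul (differentiableAt_Gamma_of_pos hy).hasDerivAt
  have heq : (fun z => Real.Gamma (z + 1)) =ᶠ[𝓝 y] fun z => z * Real.Gamma z := by
    filter_upwards [Ioi_mem_nhds hy] with z hz using Real.Gamma_add_one (ne_of_gt hz)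
  simpa only [one_mul] using hshift.unique (hmul.congr_of_eventuallyEq heq)

lemma deriv_Gamma_le_of_mem_Ioc {y : ℝ} (hy : y ∈ Ioc (0 : ℝ) 1) :
    deriv Real.Gamma y ≤ (1 - Real.Gamma y) * Real.Gamma y := by
  obtain ⟨hy0, hy1⟩ := hy
  have hΓ : 0 < Real.Gamma y := Real.Gamma_pos_of_pos hy0
  have hyΓ : y * Real.Gamma y ≤ 1 := by
    rw [← Real.Gamma_add_one hy0.ne']
    exact Gamma_le_one_of_mem_Icc ⟨by linarith, by linarith⟩
  have hlog : Real.log (y + 1) ≤ y := by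
    simpa using Real.log_le_sub_one_of_pos (by positivity : 0 < y + 1)
  have hstep : Real.Gamma y + y * deriv Real.Gamma y ≤ y * (y * Real.Gamma y) := by
    rw [← deriv_Gamma_add_one hy0, ← Real.Gamma_add_one hy0.ne']
    exact (deriv_Gamma_le_log_mul_Gamma (by positivity)).trans
      (mul_le_mul_of_nonneg_right hlog (Real.Gamma_pos_of_pos (by positivity)).le)
  refine le_of_mul_le_mul_left ?_ hy0
  have hright : y * (y * Real.Gamma y) ≤ y * Real.Gamma y :=
    mul_le_of_le_one_left (by positivity) hy1
  have hleft : Real.Gamma y * (y * Real.Gamma y) ≤ Real.Gamma y :=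
    mul_le_of_le_one_right hΓ.le hyΓ
  linarith

end GammaBounds

section ObliqueContour

/-- The direction `e^{3πi/4}`, up to a factor, of the upper branch of the contour. -/
noncomputable def obliqueDir : ℂ := -1 + Complex.I

/-- The upper branch of a Hankel contour: the ray from `σ` in the direction `obliqueDir`, along
which `exp` decays like `e^{-r}`. -/
noncomputable def obliqueRay (σ r : ℝ) : ℂ := σ + r * obliqueDir

/-- The half-plane to the right of the line that carries `obliqueRay σ`. -/
def obliqueHalfPlane (σ : ℝ) : Set ℂ := {w | σ < w.re + w.im}

/-- The contour integral `π⁻¹ ∫ e^w g(w) dw` over `obliqueRay σ`. For `g` real on the real axis its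
imaginary part is the integral `(2πi)⁻¹ ∫ e^w g(w) dw` over the Hankel contour that consists of
this ray and its complex conjugate. -/
noncomputable def hankelIntegral (g : ℂ → ℂ) (σ : ℝ) : ℂ :=
  (obliqueDir * ∫ r in Ioi (0 : ℝ), Complex.exp (obliqueRay σ r) * g (obliqueRay σ r)) / π

/-- The functions to which contour shifts of `hankelIntegral` apply: holomorphic on
`obliqueHalfPlane 0`, and bounded away from its boundary line. -/
structure HankelAdmissible (g : ℂ → ℂ) : Prop where
  differentiableOn : DifferentiableOn ℂ g (obliqueHalfPlane 0)
  bounded : ∀ σ > 0, ∃ M, ∀ w ∈ obliqueHalfPlane σ, ‖g w‖ ≤ M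

lemma obliqueDir_ne_zero : obliqueDir ≠ 0 :=
  fun h => by simpa [obliqueDir] using congrArg Complex.im h

lemma obliqueRay_re (σ r : ℝ) : (obliqueRay σ r).re = σ - r := by
  simp [obliqueRay, obliqueDir, sub_eq_add_neg]

lemma obliqueRay_im (σ r : ℝ) : (obliqueRay σ r).im = r := by
  simp [obliqueRay, obliqueDir]

lemma norm_exp_obliqueRay (σ r : ℝ) : ‖Complex.exp (obliqueRay σ r)‖ = Real.exp (σ - r) := by
  rw [Complex.norm_exp, obliqueRay_re]

lemma continuous_obliqueRay (σ : ℝ) : Continuous (obliqueRay σ) := by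
  unfold obliqueRay
  fun_prop

lemma hasDerivAt_obliqueRay_param (σ r : ℝ) : HasDerivAt (obliqueRay σ) obliqueDir r :=
  (((hasDerivAt_id r).ofReal_comp.mul_const obliqueDir).const_add (σ : ℂ)).congr_deriv (by simp)

lemma hasDerivAt_obliqueRay_base (σ r : ℝ) : HasDerivAt (fun s => obliqueRay s r) 1 σ :=
  (hasDerivAt_id σ).ofReal_comp.add_const _

lemma obliqueRay_mem_obliqueHalfPlane {σ τ : ℝ} (h : τ < σ) (r : ℝ) :
    obliqueRay σ r ∈ obliqueHalfPlane τ := by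
  simpa [obliqueHalfPlane, obliqueRay_re, obliqueRay_im] using h

lemma isOpen_obliqueHalfPlane (σ : ℝ) : IsOpen (obliqueHalfPlane σ) :=
  isOpen_lt continuous_const (Complex.continuous_re.add Complex.continuous_im)

lemma antitone_obliqueHalfPlane : Antitone obliqueHalfPlane :=
  fun _ _ h _ hw => h.trans_lt hw

lemma closedBall_subset_obliqueHalfPlane {σ δ : ℝ} {w : ℂ} (hw : w ∈ obliqueHalfPlane σ) :
    Metric.closedBall w δ ⊆ obliqueHalfPlane (σ - 2 * δ) := by
  intro v hv
  rw [Metric.mem_closedBall, Complex.dist_eq] at hv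
  have hre := (abs_le.1 (Complex.abs_re_le_norm (v - w))).1
  have him := (abs_le.1 (Complex.abs_im_le_norm (v - w))).1
  rw [Complex.sub_re] at hre
  rw [Complex.sub_im] at him
  have hw : σ < w.re + w.im := hw
  change σ - 2 * δ < v.re + v.im
  linarith

lemma integrableOn_exp_sub_Ioi (c : ℝ) : IntegrableOn (fun r => Real.exp (c - r)) (Ioi 0) := by
  simp only [sub_eq_add_neg, Real.exp_add]
  simpa [IntegrableOn] using (exp_neg_integrableOn_Ioi 0 one_pos).const_mul (Real.exp c)

lemma hankelIntegral_congr {g h : ℂ → ℂ} (hgh : EqOn g h (obliqueHalfPlane 0)) {σ : ℝ}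
    (hσ : 0 < σ) : hankelIntegral g σ = hankelIntegral h σ := by
  simp only [hankelIntegral, hgh (obliqueRay_mem_obliqueHalfPlane hσ _)]

lemma hankelIntegral_const_mul (c : ℂ) (g : ℂ → ℂ) (σ : ℝ) :
    hankelIntegral (fun w => c * g w) σ = c * hankelIntegral g σ := by
  simp only [hankelIntegral, mul_left_comm _ c, integral_const_mul, mul_div_assoc]

end ObliqueContour

namespace HankelAdmissible

variable {g : ℂ → ℂ} {σ : ℝ}

lemma continuous_comp_obliqueRay (hg : HankelAdmissible g) (hσ : 0 < σ) :
    Continuous fun r => Complex.exp (obliqueRay σ r) * g (obliqueRay σ r) :=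
  (Complex.continuous_exp.comp (continuous_obliqueRay σ)).mul
    (hg.differentiableOn.continuousOn.comp_continuous (continuous_obliqueRay σ)
      (obliqueRay_mem_obliqueHalfPlane hσ))

lemma hasDerivAt (hg : HankelAdmissible g) {w : ℂ} (hw : w ∈ obliqueHalfPlane 0) :
    HasDerivAt g (deriv g w) w :=
  (hg.differentiableOn.differentiableAt ((isOpen_obliqueHalfPlane 0).mem_nhds hw)).hasDerivAt

lemma hasDerivAt_exp_mul (hg : HankelAdmissible g) {w : ℂ} (hw : w ∈ obliqueHalfPlane 0) :
    HasDerivAt (fun w => Complex.exp w * g w) (Complex.exp w * (g w + deriv g w)) w :=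
  ((Complex.hasDerivAt_exp w).mul (hg.hasDerivAt hw)).congr_deriv (mul_add _ _ _).symm

lemma exists_norm_le_exp (hg : HankelAdmissible g) (hσ : 0 < σ) :
    ∃ M, ∀ s > σ, ∀ r,
      ‖Complex.exp (obliqueRay s r) * g (obliqueRay s r)‖ ≤ M * Real.exp (s - r) := by
  obtain ⟨M, hM⟩ := hg.bounded σ hσ
  refine ⟨M, fun s hs r => ?_⟩
  rw [norm_mul, norm_exp_obliqueRay, mul_comm]
  gcongr
  exact hM _ (obliqueRay_mem_obliqueHalfPlane hs r)

lemma integrableOn (hg : HankelAdmissible g) (hσ : 0 < σ) :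
    IntegrableOn (fun r => Complex.exp (obliqueRay σ r) * g (obliqueRay σ r)) (Ioi 0) := by
  obtain ⟨M, hM⟩ := hg.exists_norm_le_exp (half_pos hσ)
  exact ((integrableOn_exp_sub_Ioi σ).const_mul M).mono'
    (hg.continuous_comp_obliqueRay hσ).aestronglyMeasurable
    (Eventually.of_forall (hM σ (half_lt_self hσ)))

protected lemma add {h : ℂ → ℂ} (hg : HankelAdmissible g) (hh : HankelAdmissible h) :
    HankelAdmissible fun w => g w + h w where
  differentiableOn := hg.differentiableOn.add hh.differentiableOn
  bounded σ hσ := by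
    obtain ⟨M, hM⟩ := hg.bounded σ hσ
    obtain ⟨N, hN⟩ := hh.bounded σ hσ
    exact ⟨M + N, fun w hw => norm_add_le_of_le (hM w hw) (hN w hw)⟩

protected lemma const_mul (hg : HankelAdmissible g) (c : ℂ) :
    HankelAdmissible fun w => c * g w where
  differentiableOn := hg.differentiableOn.const_mul c
  bounded σ hσ := by
    obtain ⟨M, hM⟩ := hg.bounded σ hσ
    refine ⟨‖c‖ * M, fun w hw => ?_⟩
    rw [norm_mul]
    exact mul_le_mul_of_nonneg_left (hM w hw) (norm_nonneg c)

protected lemma congr {h : ℂ → ℂ} (hg : HankelAdmissible g)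
    (hgh : EqOn h g (obliqueHalfPlane 0)) : HankelAdmissible h where
  differentiableOn := hg.differentiableOn.congr hgh
  bounded σ hσ := by
    obtain ⟨M, hM⟩ := hg.bounded σ hσ
    exact ⟨M, fun w hw => hgh (antitone_obliqueHalfPlane hσ.le hw) ▸ hM w hw⟩

-- Cauchy's estimate on discs of radius `σ / 4` around the points of `obliqueHalfPlane σ`.
protected lemma deriv (hg : HankelAdmissible g) : HankelAdmissible (deriv g) where
  differentiableOn := hg.differentiableOn.deriv (isOpen_obliqueHalfPlane 0)
  bounded σ hσ := by
    obtain ⟨M, hM⟩ := hg.bounded (σ / 2) (half_pos hσ)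
    refine ⟨M / (σ / 4), fun w hw => ?_⟩
    have hball : Metric.closedBall w (σ / 4) ⊆ obliqueHalfPlane (σ / 2) := by
      convert closedBall_subset_obliqueHalfPlane hw using 2
      ring
    have hdiff : DifferentiableOn ℂ g (Metric.closedBall w (σ / 4)) :=
      hg.differentiableOn.mono (hball.trans (antitone_obliqueHalfPlane (half_pos hσ).le))
    exact Complex.norm_deriv_le_of_forall_mem_sphere_norm_le (by positivity)
      (hdiff.diffContOnCl_ball subset_rfl)
      fun v hv => hM v (hball (Metric.sphere_subset_closedBall hv))

lemma hankelIntegral_add {h : ℂ → ℂ} (hg : HankelAdmissible g) (hh : HankelAdmissible h)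
    (hσ : 0 < σ) :
    hankelIntegral (fun w => g w + h w) σ = hankelIntegral g σ + hankelIntegral h σ := by
  simp only [hankelIntegral, mul_add, add_div,
    integral_add (hg.integrableOn hσ) (hh.integrableOn hσ)]

lemma hasSum_hankelIntegral {ι : Type*} [Countable ι] {G : ι → ℂ → ℂ} {M : ι → ℝ}
    (hG : ∀ k, HankelAdmissible (G k)) (hM : Summable M) (hσ : 0 < σ)
    (hbound : ∀ k r, ‖G k (obliqueRay σ r)‖ ≤ M k)
    (hsum : ∀ r, HasSum (fun k => G k (obliqueRay σ r)) (g (obliqueRay σ r))) :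
    HasSum (fun k => hankelIntegral (G k) σ) (hankelIntegral g σ) := by
  have hintegrable := fun k => (hG k).integrableOn hσ
  have hnorm : ∀ k r, ‖Complex.exp (obliqueRay σ r) * G k (obliqueRay σ r)‖ ≤
      M k * Real.exp (σ - r) := fun k r => by
    rw [norm_mul, norm_exp_obliqueRay, mul_comm]
    exact mul_le_mul_of_nonneg_right (hbound k r) (Real.exp_pos _).le
  have hsummable : Summable fun k =>
      ∫ r in Ioi (0 : ℝ), ‖Complex.exp (obliqueRay σ r) * G k (obliqueRay σ r)‖ := by
    refine (hM.mul_right (∫ r in Ioi (0 : ℝ), Real.exp (σ - r))).of_nonneg_of_le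
      (fun k => integral_nonneg fun r => norm_nonneg _) fun k => ?_
    rw [← integral_const_mul]
    exact integral_mono (hintegrable k).norm ((integrableOn_exp_sub_Ioi σ).const_mul _) (hnorm k)
  have h := hasSum_integral_of_summable_integral_norm hintegrable hsummable
  simp only [fun r => ((hsum r).mul_left (Complex.exp (obliqueRay σ r))).tsum_eq] at h
  exact (h.mul_left obliqueDir).div_const (π : ℂ)

lemma hankelIntegral_add_deriv (hg : HankelAdmissible g) (hσ : 0 < σ) :
    hankelIntegral (fun w => g w + deriv g w) σ = -(Complex.exp σ * g σ) / π := by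
  have hray : ∀ r, obliqueRay σ r ∈ obliqueHalfPlane 0 := obliqueRay_mem_obliqueHalfPlane hσ
  have hderiv : ∀ r, HasDerivAt (fun r => Complex.exp (obliqueRay σ r) * g (obliqueRay σ r))
      (obliqueDir * (Complex.exp (obliqueRay σ r) *
        (g (obliqueRay σ r) + deriv g (obliqueRay σ r)))) r := fun r => by
    rw [mul_comm obliqueDir]
    exact (hg.hasDerivAt_exp_mul (hray r)).comp r (hasDerivAt_obliqueRay_param σ r)
  have hlim : Tendsto (fun r => Complex.exp (obliqueRay σ r) * g (obliqueRay σ r)) atTop (𝓝 0) := by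
    obtain ⟨M, hM⟩ := hg.exists_norm_le_exp (half_pos hσ)
    refine squeeze_zero_norm (hM σ (half_lt_self hσ)) ?_
    simpa [sub_eq_add_neg] using (Real.tendsto_exp_atBot.comp
      (tendsto_const_nhds (x := σ).add_atBot tendsto_neg_atTop_atBot)).const_mul M
  rw [hankelIntegral, ← integral_const_mul, integral_Ioi_of_hasDerivAt_of_tendsto'
    (fun r _ => hderiv r) (((hg.add hg.deriv).integrableOn hσ).const_mul _) hlim]
  simp [obliqueRay]

lemma hasDerivAt_hankelIntegral (hg : HankelAdmissible g) (hσ : 0 < σ) :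
    HasDerivAt (hankelIntegral g) (-(Complex.exp σ * g σ) / π) σ := by
  rw [← hg.hankelIntegral_add_deriv hσ]
  obtain ⟨M, hM⟩ := (hg.add hg.deriv).exists_norm_le_exp (half_pos hσ)
  have hM0 : 0 ≤ M := by
    have := (norm_nonneg _).trans (hM σ (half_lt_self hσ) 0)
    exact nonneg_of_mul_nonneg_left this (Real.exp_pos _)
  refine ((hasDerivAt_integral_of_dominated_loc_of_deriv_le (μ := volume.restrict (Ioi 0))
    (F := fun s r => Complex.exp (obliqueRay s r) * g (obliqueRay s r))
    (F' := fun s r => Complex.exp (obliqueRay s r) *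
      (g (obliqueRay s r) + deriv g (obliqueRay s r)))
    (bound := fun r => M * Real.exp (σ + 1 - r))
    (Ioo_mem_nhds (half_lt_self hσ) (lt_add_one σ)) ?_ (hg.integrableOn hσ)
    ((hg.add hg.deriv).continuous_comp_obliqueRay hσ).aestronglyMeasurable
    (Eventually.of_forall fun r s hs => ?_) ((integrableOn_exp_sub_Ioi (σ + 1)).const_mul M)
    (Eventually.of_forall fun r s hs => ?_)).2.const_mul obliqueDir).div_const (π : ℂ)
  · filter_upwards [Ioi_mem_nhds hσ] with s hs
    exact (hg.continuous_comp_obliqueRay hs).aestronglyMeasurable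
  · refine (hM s hs.1 r).trans ?_
    gcongr
    exact hs.2.le
  · have hs0 : 0 < s := (half_pos hσ).trans hs.1
    simpa only [mul_one, Function.comp_def] using (hg.hasDerivAt_exp_mul
      (obliqueRay_mem_obliqueHalfPlane hs0 r)).comp s (hasDerivAt_obliqueRay_base s r)

lemma im_hankelIntegral_eq (hg : HankelAdmissible g) (hreal : ∀ s : ℝ, 0 < s → (g s).im = 0)
    {τ : ℝ} (hσ : 0 < σ) (hτ : 0 < τ) :
    (hankelIntegral g σ).im = (hankelIntegral g τ).im := by
  have hderiv : ∀ s > 0, HasDerivAt (fun s => (hankelIntegral g s).im) 0 s := fun s hs => by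
    refine (Complex.imCLM.hasFDerivAt.comp_hasDerivAt s
      (hg.hasDerivAt_hankelIntegral hs)).congr_deriv ?_
    rw [Complex.imCLM_apply, Complex.div_ofReal_im, Complex.neg_im, ← Complex.ofReal_exp,
      Complex.im_ofReal_mul, hreal s hs, mul_zero, neg_zero, zero_div]
  exact isOpen_Ioi.is_const_of_deriv_eq_zero isPreconnected_Ioi
    (fun s hs => (hderiv s hs).differentiableAt.differentiableWithinAt)
    (fun s hs => (hderiv s hs).deriv) hσ hτ

end HankelAdmissible

section HankelFormula

lemma obliqueHalfPlane_zero_subset_slitPlane : obliqueHalfPlane 0 ⊆ Complex.slitPlane := by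
  intro w hw
  rw [Complex.mem_slitPlane_iff]
  by_contra! h
  have hw : 0 < w.re + w.im := hw
  linarith [h.1, h.2]

lemma half_lt_norm_of_mem_obliqueHalfPlane {σ : ℝ} {w : ℂ} (hw : w ∈ obliqueHalfPlane σ) :
    σ / 2 < ‖w‖ := by
  have hw : σ < w.re + w.im := hw
  linarith [Complex.re_le_norm w, (le_abs_self _).trans (Complex.abs_im_le_norm w)]

lemma norm_cpow_neg_ofReal (w : ℂ) (a : ℝ) : ‖w ^ (-a : ℂ)‖ = ‖w‖ ^ (-a) := by
  exact_mod_cast Complex.norm_cpow_real w (-a)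

lemma im_ofReal_cpow_neg {s : ℝ} (hs : 0 < s) (a : ℝ) : ((s : ℂ) ^ (-a : ℂ)).im = 0 := by
  exact_mod_cast congrArg Complex.im (Complex.ofReal_cpow hs.le (-a)).symm

lemma hankelAdmissible_cpow_neg {a : ℝ} (ha : 0 ≤ a) :
    HankelAdmissible fun w => w ^ (-a : ℂ) where
  differentiableOn w hw := (differentiableAt_id.cpow_const
    (obliqueHalfPlane_zero_subset_slitPlane hw)).differentiableWithinAt
  bounded σ hσ := by
    refine ⟨(σ / 2) ^ (-a), fun w hw => ?_⟩
    rw [norm_cpow_neg_ofReal]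
    exact Real.rpow_le_rpow_of_nonpos (half_pos hσ) (half_lt_norm_of_mem_obliqueHalfPlane hw).le
      (neg_nonpos.2 ha)

lemma deriv_cpow_neg {a : ℝ} {w : ℂ} (hw : w ∈ Complex.slitPlane) :
    deriv (fun w : ℂ => w ^ (-a : ℂ)) w = -a * w ^ (-(a + 1 : ℝ) : ℂ) := by
  rw [((hasDerivAt_id' w).cpow_const hw).deriv]
  simp [sub_eq_add_neg, add_comm]

lemma im_hankelIntegral_cpow_neg_eq_mul {a σ : ℝ} (ha : 0 ≤ a) (hσ : 0 < σ) :
    (hankelIntegral (fun w => w ^ (-a : ℂ)) σ).im =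
      a * (hankelIntegral (fun w => w ^ (-(a + 1 : ℝ) : ℂ)) σ).im := by
  have hadm := hankelAdmissible_cpow_neg ha
  have hsum := hadm.hankelIntegral_add_deriv hσ
  rw [hadm.hankelIntegral_add hadm.deriv hσ, hankelIntegral_congr (fun w hw =>
    deriv_cpow_neg (obliqueHalfPlane_zero_subset_slitPlane hw)) hσ,
    hankelIntegral_const_mul] at hsum
  have him := congrArg Complex.im hsum
  simp only [Complex.div_ofReal_im, ← Complex.ofReal_exp, neg_mul, Complex.add_im, Complex.neg_im,
    Complex.im_ofReal_mul, im_ofReal_cpow_neg hσ, mul_zero, neg_zero, zero_div] at him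
  exact add_neg_eq_zero.1 him

lemma ofReal_mul_cpow_of_pos {r : ℝ} (hr : 0 < r) {z : ℂ} (hz : z ≠ 0) (c : ℂ) :
    ((r : ℂ) * z) ^ c = (r : ℂ) ^ c * z ^ c := by
  have hr0 : (r : ℂ) ≠ 0 := Complex.ofReal_ne_zero.2 hr.ne'
  rw [Complex.cpow_def_of_ne_zero (mul_ne_zero hr0 hz), Complex.cpow_def_of_ne_zero hr0,
    Complex.cpow_def_of_ne_zero hz, Complex.log_ofReal_mul hr hz, Complex.ofReal_log hr.le, add_mul,
    Complex.exp_add]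

lemma obliqueDir_cpow_mul_cpow (s : ℂ) :
    obliqueDir ^ s * (1 / -obliqueDir) ^ s = Complex.exp (s * (π * Complex.I)) := by
  have hlog : Complex.log obliqueDir = Complex.log (-obliqueDir) + π * Complex.I := by
    have harg := Complex.arg_neg_eq_arg_add_pi_of_im_neg (x := -obliqueDir) (by simp [obliqueDir])
    rw [neg_neg] at harg
    rw [Complex.log, Complex.log, harg, norm_neg]
    push_cast
    ring
  have harg : (-obliqueDir).arg ≠ π := by
    intro h
    have := (Complex.arg_eq_pi_iff.1 h).1
    norm_num [obliqueDir] at this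
  rw [one_div, Complex.cpow_def_of_ne_zero obliqueDir_ne_zero,
    Complex.cpow_def_of_ne_zero (inv_ne_zero (neg_ne_zero.2 obliqueDir_ne_zero)),
    Complex.log_inv _ harg, hlog, ← Complex.exp_add]
  ring_nf

lemma hankelIntegral_cpow_neg_zero {a : ℝ} (ha : a < 1) :
    hankelIntegral (fun w => w ^ (-a : ℂ)) 0 =
      Complex.exp ((1 - a : ℝ) * π * Complex.I) * Real.Gamma (1 - a) / π := by
  have hintegrand : ∀ r ∈ Ioi (0 : ℝ), Complex.exp (obliqueRay 0 r) * obliqueRay 0 r ^ (-a : ℂ) =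
      obliqueDir ^ (-a : ℂ) *
        ((r : ℂ) ^ (((1 - a : ℝ) : ℂ) - 1) * Complex.exp (-(-obliqueDir * r))) := fun r hr => by
    have hray : obliqueRay 0 r = r * obliqueDir := by simp [obliqueRay]
    rw [hray, ofReal_mul_cpow_of_pos hr obliqueDir_ne_zero]
    push_cast
    ring_nf
  rw [hankelIntegral, setIntegral_congr_fun measurableSet_Ioi hintegrand, integral_const_mul,
    integral_cpow_mul_exp_neg_mul_Ioi_of_re_pos (by simpa using ha) (by simp [obliqueDir]),
    Complex.Gamma_ofReal, mul_assoc _ (π : ℂ), ← obliqueDir_cpow_mul_cpow]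
  have hpow : obliqueDir * obliqueDir ^ (-a : ℂ) = obliqueDir ^ ((1 - a : ℝ) : ℂ) := by
    push_cast
    rw [sub_eq_add_neg, Complex.cpow_add _ _ obliqueDir_ne_zero, Complex.cpow_one]
  rw [← hpow]
  ring

lemma im_hankelIntegral_cpow_neg_zero {a : ℝ} (ha : a < 1) :
    (hankelIntegral (fun w => w ^ (-a : ℂ)) 0).im = (Real.Gamma a)⁻¹ := by
  have hΓ : Real.Gamma (1 - a) ≠ 0 := (Real.Gamma_pos_of_pos (sub_pos.2 ha)).ne'
  have hreflect : Real.Gamma a = π / Real.sin (π * a) / Real.Gamma (1 - a) :=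
    eq_div_of_mul_eq hΓ (Real.Gamma_mul_Gamma_one_sub a)
  rw [hankelIntegral_cpow_neg_zero ha, ← Complex.ofReal_mul, Complex.div_ofReal_im,
    Complex.im_mul_ofReal, Complex.exp_ofReal_mul_I_im, hreflect, div_div, inv_div,
    show (1 - a) * π = π - π * a by ring, Real.sin_pi_sub]

lemma tendsto_hankelIntegral_cpow_neg {a : ℝ} (ha0 : 0 < a) (ha1 : a < 1) :
    Tendsto (hankelIntegral fun w => w ^ (-a : ℂ)) (𝓝[>] 0)
      (𝓝 (hankelIntegral (fun w => w ^ (-a : ℂ)) 0)) := by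
  have hdom : IntegrableOn (fun r => Real.exp 1 * (Real.exp (-r) * r ^ (1 - a - 1))) (Ioi 0) :=
    (Real.GammaIntegral_convergent (sub_pos.2 ha1)).const_mul _
  refine ((tendsto_integral_filter_of_dominated_convergence _ (Eventually.of_forall fun σ => ?_)
    ?_ hdom (ae_restrict_of_forall_mem measurableSet_Ioi fun r hr => ?_)).const_mul
      obliqueDir).div_const (π : ℂ)
  · have := (continuous_obliqueRay σ).measurable
    exact Measurable.aestronglyMeasurable (by fun_prop)
  · filter_upwards [Ioo_mem_nhdsGT one_pos] with σ hσ
    refine ae_restrict_of_forall_mem measurableSet_Ioi fun r hr => ?_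
    have hr : 0 < r := hr
    have hnorm : r ≤ ‖obliqueRay σ r‖ := by
      simpa only [obliqueRay_im] using
        (le_abs_self _).trans (Complex.abs_im_le_norm (obliqueRay σ r))
    rw [norm_mul, norm_exp_obliqueRay, norm_cpow_neg_ofReal, ← mul_assoc, ← Real.exp_add,
      sub_sub_cancel_left, ← sub_eq_add_neg]
    gcongr ?_ * ?_
    · exact Real.exp_le_exp.2 (sub_le_sub_right hσ.2.le r)
    · exact Real.rpow_le_rpow_of_nonpos hr hnorm (neg_nonpos.2 ha0.le)
  · have hslit : obliqueRay 0 r ∈ Complex.slitPlane := by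
      rw [Complex.mem_slitPlane_iff, obliqueRay_im]
      exact Or.inr (ne_of_gt hr)
    have hcont : ContinuousAt (fun σ => obliqueRay σ r) 0 :=
      (hasDerivAt_obliqueRay_base 0 r).continuousAt
    exact (hcont.cexp.mul (hcont.cpow continuousAt_const hslit)).continuousWithinAt

lemma im_hankelIntegral_cpow_neg_of_lt_one {a σ : ℝ} (ha0 : 0 < a) (ha1 : a < 1) (hσ : 0 < σ) :
    (hankelIntegral (fun w => w ^ (-a : ℂ)) σ).im = (Real.Gamma a)⁻¹ := by
  rw [← im_hankelIntegral_cpow_neg_zero ha1]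
  refine tendsto_nhds_unique (tendsto_const_nhds.congr' ?_)
    ((Complex.continuous_im.tendsto _).comp (tendsto_hankelIntegral_cpow_neg ha0 ha1))
  filter_upwards [self_mem_nhdsWithin] with τ hτ
  exact (hankelAdmissible_cpow_neg ha0.le).im_hankelIntegral_eq
    (fun s hs => im_ofReal_cpow_neg hs a) hσ hτ

lemma continuousOn_hankelIntegral_cpow_neg :
    ContinuousOn (fun a : ℝ => hankelIntegral (fun w => w ^ (-a : ℂ)) 3) (Ici 0) := by
  refine (ContinuousOn.const_mul (continuousOn_of_dominated (fun a ha => ?_)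
    (fun a ha => Eventually.of_forall fun r => ?_) (integrableOn_exp_sub_Ioi 3)
    (Eventually.of_forall fun r => ?_)) obliqueDir).div_const (π : ℂ)
  · exact ((hankelAdmissible_cpow_neg ha).integrableOn three_pos).aestronglyMeasurable
  · have hnorm : 1 ≤ ‖obliqueRay 3 r‖ := by
      have hmem : obliqueRay 3 r ∈ obliqueHalfPlane 2 :=
        obliqueRay_mem_obliqueHalfPlane (by norm_num) r
      linarith [half_lt_norm_of_mem_obliqueHalfPlane hmem]
    rw [norm_mul, norm_exp_obliqueRay, norm_cpow_neg_ofReal]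
    exact mul_le_of_le_one_right (Real.exp_pos _).le
      (Real.rpow_le_one_of_one_le_of_nonpos hnorm (neg_nonpos.2 ha))
  · have hne : obliqueRay 3 r ≠ 0 := Complex.slitPlane_ne_zero
      (obliqueHalfPlane_zero_subset_slitPlane (obliqueRay_mem_obliqueHalfPlane three_pos r))
    exact (continuous_const.mul (Continuous.const_cpow (by fun_prop) (Or.inl hne))).continuousOn

lemma im_hankelIntegral_cpow_neg_one {σ : ℝ} (hσ : 0 < σ) :
    (hankelIntegral (fun w => w ^ (-(1 : ℝ) : ℂ)) σ).im = (Real.Gamma 1)⁻¹ := by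
  rw [(hankelAdmissible_cpow_neg zero_le_one).im_hankelIntegral_eq
    (fun s hs => im_ofReal_cpow_neg hs 1) hσ three_pos]
  have hleft : Tendsto (fun a : ℝ => (hankelIntegral (fun w => w ^ (-a : ℂ)) 3).im) (𝓝[<] 1)
      (𝓝 (hankelIntegral (fun w => w ^ (-(1 : ℝ) : ℂ)) 3).im) :=
    (Complex.continuous_im.tendsto _).comp ((continuousOn_hankelIntegral_cpow_neg.continuousAt
      (Ici_mem_nhds one_pos)).tendsto.mono_left nhdsWithin_le_nhds)
  have hright : Tendsto (fun a => (Real.Gamma a)⁻¹) (𝓝[<] 1) (𝓝 (Real.Gamma 1)⁻¹) :=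
    ((differentiableAt_Gamma_of_pos one_pos).continuousAt.inv₀
      (Real.Gamma_pos_of_pos one_pos).ne').tendsto.mono_left nhdsWithin_le_nhds
  refine tendsto_nhds_unique hleft (hright.congr' ?_)
  filter_upwards [Ioo_mem_nhdsLT one_pos] with a ha
  exact (im_hankelIntegral_cpow_neg_of_lt_one ha.1 ha.2 three_pos).symm

theorem im_hankelIntegral_cpow_neg {a σ : ℝ} (ha : 0 < a) (hσ : 0 < σ) :
    (hankelIntegral (fun w => w ^ (-a : ℂ)) σ).im = (Real.Gamma a)⁻¹ := by
  obtain ⟨n, hn⟩ := exists_nat_ge a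
  induction n generalizing a with
  | zero => exact absurd hn (by simpa using ha)
  | succ n ih =>
    rcases lt_trichotomy a 1 with ha1 | rfl | ha1
    · exact im_hankelIntegral_cpow_neg_of_lt_one ha ha1 hσ
    · exact im_hankelIntegral_cpow_neg_one hσ
    · have hb : 0 < a - 1 := sub_pos.2 ha1
      have hrec := im_hankelIntegral_cpow_neg_eq_mul hb.le hσ
      have hΓ := Real.Gamma_add_one hb.ne'
      rw [ih hb (by push_cast at hn; linarith)] at hrec
      rw [sub_add_cancel] at hrec hΓ
      rw [hΓ, mul_inv, hrec, inv_mul_cancel_left₀ hb.ne']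

end HankelFormula

section MittagLefflerKernel

variable {ρ x : ℝ} {w : ℂ}

/-- The variable `ζ = w ^ ρ / x`, in terms of which the Laplace transform
`w ^ (ρ - 1) / (w ^ ρ + x)` of `t ↦ E_ρ(-x t ^ ρ)` is `w⁻¹ ζ / (1 + ζ)`. -/
noncomputable def scaledPow (ρ x : ℝ) (w : ℂ) : ℂ := w ^ (ρ : ℂ) / x

/-- The Laplace transform `w ^ (ρ - 1) / (w ^ ρ + x)` of `t ↦ E_ρ(-x t ^ ρ)`. -/
noncomputable def mittagLefflerKernel (ρ x : ℝ) (w : ℂ) : ℂ :=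
  w⁻¹ * (scaledPow ρ x w / (1 + scaledPow ρ x w))

/-- What is left of `mittagLefflerKernel` after its leading term `x⁻¹ * w ^ (ρ - 1)` for large `x`,
with the sign reversed. -/
noncomputable def mittagLefflerRemainder (ρ x : ℝ) (w : ℂ) : ℂ :=
  w⁻¹ * (scaledPow ρ x w ^ 2 / (1 + scaledPow ρ x w))

lemma sqrt_two_div_two_le_norm_one_add {ζ : ℂ} (hζ : -(√2 / 2 * ‖ζ‖) ≤ ζ.re) :
    √2 / 2 ≤ ‖1 + ζ‖ := by
  have hsq : ‖1 + ζ‖ ^ 2 = 1 + 2 * ζ.re + ‖ζ‖ ^ 2 := by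
    simp only [Complex.sq_norm, Complex.normSq_apply, Complex.add_re, Complex.add_im,
      Complex.one_re, Complex.one_im]
    ring
  have h2 : √2 ^ 2 = 2 := Real.sq_sqrt zero_le_two
  refine le_of_sq_le_sq ?_ (norm_nonneg _)
  nlinarith [sq_nonneg (‖ζ‖ - √2 / 2)]

lemma neg_sqrt_two_div_two_le_cos_arg (hw : w ∈ obliqueHalfPlane 0) :
    -(√2 / 2) ≤ Real.cos w.arg := by
  have hw0 : w ≠ 0 := Complex.slitPlane_ne_zero (obliqueHalfPlane_zero_subset_slitPlane hw)
  have hw : 0 < w.re + w.im := hw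
  rw [Complex.cos_arg hw0, le_div_iff₀ (norm_pos_iff.2 hw0)]
  rcases le_or_gt 0 w.re with hre | hre
  · exact le_trans (by simp) hre
  · have h2 : √2 ^ 2 = 2 := Real.sq_sqrt zero_le_two
    have hsq : (-w.re) ^ 2 ≤ (√2 / 2 * ‖w‖) ^ 2 := by
      rw [mul_pow, Complex.sq_norm, Complex.normSq_apply, div_pow, h2]
      nlinarith
    linarith [le_of_sq_le_sq hsq (by positivity)]

lemma neg_sqrt_two_mul_norm_cpow_le_re (hρ : ρ ∈ Icc (0 : ℝ) 1) (hw : w ∈ obliqueHalfPlane 0) :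
    -(√2 / 2 * ‖w ^ (ρ : ℂ)‖) ≤ (w ^ (ρ : ℂ)).re := by
  have hcos : Real.cos w.arg ≤ Real.cos (w.arg * ρ) := by
    rw [← Real.cos_abs w.arg, ← Real.cos_abs (w.arg * ρ), abs_mul, abs_of_nonneg hρ.1]
    exact Real.cos_le_cos_of_nonneg_of_le_pi (mul_nonneg (abs_nonneg _) hρ.1)
      (Complex.abs_arg_le_pi w) (mul_le_of_le_one_right (abs_nonneg _) hρ.2)
  rw [Complex.norm_cpow_real, Complex.cpow_ofReal_re, ← neg_mul, mul_comm]
  exact mul_le_mul_of_nonneg_left ((neg_sqrt_two_div_two_le_cos_arg hw).trans hcos) (by positivity)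

lemma norm_scaledPow (hx : 0 < x) : ‖scaledPow ρ x w‖ = ‖w‖ ^ ρ / x := by
  rw [scaledPow, norm_div, Complex.norm_cpow_real, Complex.norm_real, Real.norm_of_nonneg hx.le]

lemma half_le_norm_one_add_scaledPow (hρ : ρ ∈ Icc (0 : ℝ) 1) (hx : 0 < x)
    (hw : w ∈ obliqueHalfPlane 0) : 1 / 2 ≤ ‖1 + scaledPow ρ x w‖ := by
  have hre : -(√2 / 2 * ‖scaledPow ρ x w‖) ≤ (scaledPow ρ x w).re := by
    rw [scaledPow, norm_div, Complex.norm_real, Real.norm_of_nonneg hx.le, Complex.div_ofReal_re,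
      ← mul_div_assoc, ← neg_div]
    exact div_le_div_of_nonneg_right (neg_sqrt_two_mul_norm_cpow_le_re hρ hw) hx.le
  have hsqrt : 1 ≤ √2 := Real.one_le_sqrt.2 one_le_two
  linarith [sqrt_two_div_two_le_norm_one_add hre]

lemma one_add_scaledPow_ne_zero (hρ : ρ ∈ Icc (0 : ℝ) 1) (hx : 0 < x)
    (hw : w ∈ obliqueHalfPlane 0) : 1 + scaledPow ρ x w ≠ 0 :=
  norm_pos_iff.1 (one_half_pos.trans_le (half_le_norm_one_add_scaledPow hρ hx hw))

lemma norm_inv_one_add_scaledPow_le (hρ : ρ ∈ Icc (0 : ℝ) 1) (hx : 0 < x)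
    (hw : w ∈ obliqueHalfPlane 0) : ‖(1 + scaledPow ρ x w)⁻¹‖ ≤ 2 := by
  rw [norm_inv]
  exact inv_le_of_inv_le₀ two_pos (by simpa using half_le_norm_one_add_scaledPow hρ hx hw)

lemma norm_scaledPow_div_one_add_le (hρ : ρ ∈ Icc (0 : ℝ) 1) (hx : 0 < x)
    (hw : w ∈ obliqueHalfPlane 0) : ‖scaledPow ρ x w / (1 + scaledPow ρ x w)‖ ≤ 3 := by
  have hsub : scaledPow ρ x w / (1 + scaledPow ρ x w) = 1 - (1 + scaledPow ρ x w)⁻¹ := by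
    rw [eq_sub_iff_add_eq, div_eq_mul_inv, ← add_one_mul, add_comm,
      mul_inv_cancel₀ (one_add_scaledPow_ne_zero hρ hx hw)]
  rw [hsub]
  calc ‖1 - (1 + scaledPow ρ x w)⁻¹‖ ≤ ‖(1 : ℂ)‖ + ‖(1 + scaledPow ρ x w)⁻¹‖ := norm_sub_le _ _
    _ ≤ 3 := by linarith [norm_one (α := ℂ), norm_inv_one_add_scaledPow_le hρ hx hw]

lemma hankelAdmissible_mittagLefflerKernel (hρ : ρ ∈ Icc (0 : ℝ) 1) (hx : 0 < x) :
    HankelAdmissible (mittagLefflerKernel ρ x) where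
  differentiableOn w hw := by
    have hslit := obliqueHalfPlane_zero_subset_slitPlane hw
    have hpow : DifferentiableAt ℂ (scaledPow ρ x) w :=
      (differentiableAt_id.cpow_const hslit).div_const _
    exact ((differentiableAt_inv (Complex.slitPlane_ne_zero hslit)).mul
      (hpow.div (hpow.const_add 1) (one_add_scaledPow_ne_zero hρ hx hw))).differentiableWithinAt
  bounded σ hσ := by
    refine ⟨(σ / 2)⁻¹ * 3, fun w hw => ?_⟩
    rw [mittagLefflerKernel, norm_mul, norm_inv]
    exact mul_le_mul (inv_anti₀ (half_pos hσ) (half_lt_norm_of_mem_obliqueHalfPlane hw).le)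
      (norm_scaledPow_div_one_add_le hρ hx (antitone_obliqueHalfPlane hσ.le hw)) (norm_nonneg _)
      (by positivity)

lemma im_mittagLefflerKernel_ofReal {s : ℝ} (hs : 0 < s) : (mittagLefflerKernel ρ x s).im = 0 := by
  rw [mittagLefflerKernel, scaledPow, ← Complex.ofReal_cpow hs.le]
  exact_mod_cast Complex.ofReal_im (s⁻¹ * (s ^ ρ / x / (1 + s ^ ρ / x)))

lemma hasSum_mittagLefflerKernel (hx : 0 < x) (hw : w ∈ obliqueHalfPlane 0) (hwx : x < ‖w‖ ^ ρ) :
    HasSum (fun k : ℕ => (-x : ℂ) ^ k * w ^ (-(ρ * k + 1 : ℝ) : ℂ))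
      (mittagLefflerKernel ρ x w) := by
  have hw0 : w ≠ 0 := Complex.slitPlane_ne_zero (obliqueHalfPlane_zero_subset_slitPlane hw)
  have hnorm : 1 < ‖scaledPow ρ x w‖ := by rwa [norm_scaledPow hx, one_lt_div hx]
  have hz0 : scaledPow ρ x w ≠ 0 := norm_pos_iff.1 (one_pos.trans hnorm)
  have hgeom := (hasSum_geometric_of_norm_lt_one (ξ := -(scaledPow ρ x w)⁻¹)
    (by rw [norm_neg, norm_inv]; exact inv_lt_one_of_one_lt₀ hnorm)).mul_left w⁻¹
  have hsum : (1 - -(scaledPow ρ x w)⁻¹)⁻¹ = scaledPow ρ x w / (1 + scaledPow ρ x w) := by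
    rw [sub_neg_eq_add, ← inv_div, add_div, div_self hz0, one_div, add_comm]
  rw [hsum] at hgeom
  refine hgeom.congr_fun fun k => ?_
  have hinv : (scaledPow ρ x w)⁻¹ = x * w ^ (-ρ : ℂ) := by
    rw [scaledPow, inv_div, Complex.cpow_neg, div_eq_mul_inv]
  have hpow : w ^ (-(ρ * k + 1 : ℝ) : ℂ) = (w ^ (-ρ : ℂ)) ^ k * w⁻¹ := by
    rw [← Complex.cpow_nat_mul, ← Complex.cpow_neg_one, ← Complex.cpow_add _ _ hw0]
    push_cast
    ring_nf
  rw [hpow, hinv]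
  ring

end MittagLefflerKernel

section MittagLefflerRepresentation

variable {ρ x σ : ℝ}

lemma norm_neg_pow_mul_cpow_neg_le (hx : 0 < x) {w : ℂ} (hw : 1 ≤ ‖w‖) (hwx : 2 * x ≤ ‖w‖ ^ ρ)
    (k : ℕ) : ‖(-x : ℂ) ^ k * w ^ (-(ρ * k + 1 : ℝ) : ℂ)‖ ≤ (1 / 2) ^ k := by
  rw [norm_mul, norm_pow, norm_neg, Complex.norm_real, Real.norm_of_nonneg hx.le,
    norm_cpow_neg_ofReal, Real.rpow_neg (norm_nonneg _), Real.rpow_add_one (by positivity),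
    Real.rpow_mul_natCast (norm_nonneg _), ← div_eq_mul_inv, div_le_iff₀ (by positivity)]
  calc x ^ k ≤ (1 / 2 * ‖w‖ ^ ρ) ^ k := by
        gcongr
        linarith
    _ ≤ (1 / 2) ^ k * ((‖w‖ ^ ρ) ^ k * ‖w‖) := by
        rw [mul_pow]
        gcongr
        exact le_mul_of_one_le_right (by positivity) hw

lemma mittagLeffler_neg_eq_of_large (hρ : ρ ∈ Ioc (0 : ℝ) 1) (hx : 0 < x) {R : ℝ}
    (hR : 1 ≤ R) (hRx : 2 * x ≤ R ^ ρ) :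
    mittagLeffler ρ (-x) = (hankelIntegral (mittagLefflerKernel ρ x) (2 * R + 1)).im := by
  have hσ : 0 < 2 * R + 1 := by positivity
  have hnorm : ∀ r, R < ‖obliqueRay (2 * R + 1) r‖ := fun r => by
    simpa using half_lt_norm_of_mem_obliqueHalfPlane
      (obliqueRay_mem_obliqueHalfPlane (lt_add_one (2 * R)) r)
  have hrpow : ∀ r, 2 * x ≤ ‖obliqueRay (2 * R + 1) r‖ ^ ρ := fun r =>
    hRx.trans (Real.rpow_le_rpow (by positivity) (hnorm r).le hρ.1.le)
  have hexp : ∀ k : ℕ, 0 < ρ * k + 1 := fun k => by have := hρ.1; positivity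
  have hbound : ∀ (k : ℕ) r,
      ‖(-x : ℂ) ^ k * obliqueRay (2 * R + 1) r ^ (-(ρ * k + 1 : ℝ) : ℂ)‖ ≤ (1 / 2) ^ k :=
    fun k r => norm_neg_pow_mul_cpow_neg_le hx (hR.trans (hnorm r).le) (hrpow r) k
  have hsum := HankelAdmissible.hasSum_hankelIntegral
    (fun k => (hankelAdmissible_cpow_neg (hexp k).le).const_mul ((-x : ℂ) ^ k))
    summable_geometric_two hσ hbound fun r => hasSum_mittagLefflerKernel hx
      (obliqueRay_mem_obliqueHalfPlane hσ r) (by linarith [hrpow r])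
  have hterm : ∀ k : ℕ, (hankelIntegral (fun w => (-x : ℂ) ^ k * w ^ (-(ρ * k + 1 : ℝ) : ℂ))
      (2 * R + 1)).im = (-x) ^ k / Real.Gamma (ρ * k + 1) := fun k => by
    rw [hankelIntegral_const_mul, ← Complex.ofReal_neg x, ← Complex.ofReal_pow,
      Complex.im_ofReal_mul, im_hankelIntegral_cpow_neg (hexp k) hσ, div_eq_mul_inv]
  have him := Complex.hasSum_im hsum
  simp only [hterm] at him
  exact him.tsum_eq

theorem mittagLeffler_neg_eq_im_hankelIntegral (hρ : ρ ∈ Ioc (0 : ℝ) 1) (hx : 0 < x) (hσ : 0 < σ) :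
    mittagLeffler ρ (-x) = (hankelIntegral (mittagLefflerKernel ρ x) σ).im := by
  obtain ⟨R, hRx, hR⟩ := (((tendsto_rpow_atTop hρ.1).eventually_ge_atTop (2 * x)).and
    (eventually_ge_atTop 1)).exists
  rw [mittagLeffler_neg_eq_of_large hρ hx hR hRx]
  exact (hankelAdmissible_mittagLefflerKernel (Ioc_subset_Icc_self hρ) hx).im_hankelIntegral_eq
    (fun s hs => im_mittagLefflerKernel_ofReal hs) (by positivity) hσ

lemma mittagLefflerRemainder_eq (hρ : ρ ∈ Icc (0 : ℝ) 1) (hx : 0 < x) {w : ℂ}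
    (hw : w ∈ obliqueHalfPlane 0) :
    mittagLefflerRemainder ρ x w =
      (x⁻¹ : ℝ) * w ^ (-(1 - ρ : ℝ) : ℂ) + (-1) * mittagLefflerKernel ρ x w := by
  have hw0 : w ≠ 0 := Complex.slitPlane_ne_zero (obliqueHalfPlane_zero_subset_slitPlane hw)
  have hz := one_add_scaledPow_ne_zero hρ hx hw
  have hlead : (x⁻¹ : ℝ) * w ^ (-(1 - ρ : ℝ) : ℂ) = w⁻¹ * scaledPow ρ x w := by
    rw [scaledPow, Complex.ofReal_inv, ← Complex.cpow_neg_one w, mul_div_assoc',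
      ← Complex.cpow_add _ _ hw0, div_eq_inv_mul]
    push_cast
    ring_nf
  rw [hlead, mittagLefflerRemainder, mittagLefflerKernel]
  field_simp
  ring

lemma hankelAdmissible_mittagLefflerRemainder (hρ : ρ ∈ Icc (0 : ℝ) 1) (hx : 0 < x) :
    HankelAdmissible (mittagLefflerRemainder ρ x) :=
  (((hankelAdmissible_cpow_neg (sub_nonneg.2 hρ.2)).const_mul (x⁻¹ : ℝ)).add
    ((hankelAdmissible_mittagLefflerKernel hρ hx).const_mul (-1))).congr
      fun _ hw => mittagLefflerRemainder_eq hρ hx hw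

theorem mittagLeffler_neg_eq_sub_remainder (hρ : ρ ∈ Ioo (0 : ℝ) 1) (hx : 0 < x) (hσ : 0 < σ) :
    mittagLeffler ρ (-x) = x⁻¹ * (Real.Gamma (1 - ρ))⁻¹ -
      (hankelIntegral (mittagLefflerRemainder ρ x) σ).im := by
  have hρ' := Ioo_subset_Icc_self hρ
  rw [mittagLeffler_neg_eq_im_hankelIntegral (Ioo_subset_Ioc_self hρ) hx hσ,
    hankelIntegral_congr (fun w hw => mittagLefflerRemainder_eq hρ' hx hw) hσ,
    ((hankelAdmissible_cpow_neg (sub_nonneg.2 hρ'.2)).const_mul _).hankelIntegral_add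
      ((hankelAdmissible_mittagLefflerKernel hρ' hx).const_mul _) hσ,
    hankelIntegral_const_mul, hankelIntegral_const_mul, Complex.add_im, Complex.im_ofReal_mul,
    im_hankelIntegral_cpow_neg (sub_pos.2 hρ.2) hσ, neg_one_mul, Complex.neg_im]
  ring

end MittagLefflerRepresentation

section DerivativeInOrder

variable {lam t ρ : ℝ} {w : ℂ}

/-- The derivative in `ρ` of `mittagLefflerRemainder ρ (lam * t ^ ρ) w`. -/
noncomputable def mittagLefflerRemainderDeriv (lam t ρ : ℝ) (w : ℂ) : ℂ :=
  w⁻¹ * (Complex.log w - Real.log t) * (scaledPow ρ (lam * t ^ ρ) w ^ 2 *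
    ((1 + scaledPow ρ (lam * t ^ ρ) w)⁻¹ + (1 + scaledPow ρ (lam * t ^ ρ) w)⁻¹ ^ 2))

lemma hasDerivAt_scaledPow (ht : 0 < t) (hw : w ≠ 0) :
    HasDerivAt (fun ρ : ℝ => scaledPow ρ (lam * t ^ ρ) w)
      (scaledPow ρ (lam * t ^ ρ) w * (Complex.log w - Real.log t)) ρ := by
  have hexp : ∀ s : ℝ, scaledPow s (lam * t ^ s) w =
      Complex.exp (s * (Complex.log w - Real.log t)) / lam := fun s => by
    rw [scaledPow, Complex.cpow_def_of_ne_zero hw, Real.rpow_def_of_pos ht, Complex.ofReal_mul,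
      Complex.ofReal_exp, mul_comm (lam : ℂ), ← div_div, ← Complex.exp_sub]
    push_cast
    ring_nf
  simp only [hexp]
  exact ((((hasDerivAt_id ρ).ofReal_comp.mul_const _).cexp).div_const _).congr_deriv
    (by simp; ring)

lemma hasDerivAt_mittagLefflerRemainder (hlam : 0 < lam) (ht : 0 < t) (hρ : ρ ∈ Icc (0 : ℝ) 1)
    (hw : w ∈ obliqueHalfPlane 0) :
    HasDerivAt (fun ρ : ℝ => mittagLefflerRemainder ρ (lam * t ^ ρ) w)
      (mittagLefflerRemainderDeriv lam t ρ w) ρ := by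
  have hw0 : w ≠ 0 := Complex.slitPlane_ne_zero (obliqueHalfPlane_zero_subset_slitPlane hw)
  have hz := one_add_scaledPow_ne_zero hρ (mul_pos hlam (Real.rpow_pos_of_pos ht ρ)) hw
  have hpow := hasDerivAt_scaledPow (lam := lam) (ρ := ρ) ht hw0
  refine (((hpow.pow 2).div (hpow.const_add 1) hz).const_mul w⁻¹).congr_deriv ?_
  rw [mittagLefflerRemainderDeriv, Pi.pow_apply]
  field_simp
  push_cast
  ring

lemma norm_log_le_of_one_le_norm (hw : 1 ≤ ‖w‖) : ‖Complex.log w‖ ≤ 4 * ‖w‖ := by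
  have hlog : Real.log ‖w‖ ≤ ‖w‖ - 1 := Real.log_le_sub_one_of_pos (one_pos.trans_le hw)
  calc ‖Complex.log w‖ ≤ |(Complex.log w).re| + |(Complex.log w).im| :=
        Complex.norm_le_abs_re_add_abs_im _
    _ = Real.log ‖w‖ + |w.arg| := by
        rw [Complex.log_re, Complex.log_im, abs_of_nonneg (Real.log_nonneg hw)]
    _ ≤ 4 * ‖w‖ := by linarith [Complex.abs_arg_le_pi w, Real.pi_le_four]

lemma norm_mittagLefflerRemainderDeriv_le (hlam : 0 < lam) (ht : 1 ≤ t)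
    (hρ : ρ ∈ Icc (0 : ℝ) 1) (hw : w ∈ obliqueHalfPlane 2) :
    ‖mittagLefflerRemainderDeriv lam t ρ w‖ ≤
      24 * ((1 + Real.log t) / (lam * t ^ ρ) ^ 2) * ‖w‖ ^ 2 := by
  have hx : 0 < lam * t ^ ρ := mul_pos hlam (Real.rpow_pos_of_pos (one_pos.trans_le ht) ρ)
  have hlogt : 0 ≤ Real.log t := Real.log_nonneg ht
  have hw1 : 1 ≤ ‖w‖ := by linarith [half_lt_norm_of_mem_obliqueHalfPlane hw]
  have hlog : ‖w⁻¹ * (Complex.log w - Real.log t)‖ ≤ 4 * (1 + Real.log t) := by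
    rw [norm_mul, norm_inv, inv_mul_le_iff₀ (by positivity)]
    calc ‖Complex.log w - Real.log t‖ ≤ 4 * ‖w‖ + Real.log t := by
          refine norm_sub_le_of_le (norm_log_le_of_one_le_norm hw1) ?_
          rw [Complex.norm_real, Real.norm_of_nonneg hlogt]
      _ ≤ ‖w‖ * (4 * (1 + Real.log t)) := by nlinarith
  have hpow : ‖scaledPow ρ (lam * t ^ ρ) w‖ ≤ ‖w‖ / (lam * t ^ ρ) := by
    rw [norm_scaledPow hx]
    gcongr
    exact Real.rpow_le_self_of_one_le hw1 hρ.2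
  have hinv : ‖(1 + scaledPow ρ (lam * t ^ ρ) w)⁻¹‖ ≤ 2 :=
    norm_inv_one_add_scaledPow_le hρ hx (antitone_obliqueHalfPlane zero_le_two hw)
  have hsum : ‖(1 + scaledPow ρ (lam * t ^ ρ) w)⁻¹ + (1 + scaledPow ρ (lam * t ^ ρ) w)⁻¹ ^ 2‖ ≤
      2 + 2 ^ 2 := by
    refine norm_add_le_of_le hinv ?_
    rw [norm_pow]
    gcongr
  rw [mittagLefflerRemainderDeriv, norm_mul, norm_mul (scaledPow ρ (lam * t ^ ρ) w ^ 2), norm_pow]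
  calc _ ≤ 4 * (1 + Real.log t) * ((‖w‖ / (lam * t ^ ρ)) ^ 2 * (2 + 2 ^ 2)) := by gcongr
    _ = _ := by ring

lemma norm_sq_obliqueRay_mul_exp_le {r : ℝ} (hr : 0 ≤ r) :
    ‖obliqueRay 3 r‖ ^ 2 * Real.exp (3 - r) ≤ 25 * Real.exp 3 * Real.exp (-(1 / 2) * r) := by
  have hone : 1 ≤ Real.exp (r / 2) := Real.one_le_exp (by positivity)
  have hsq : (r / 2) ^ 2 / 2 ≤ Real.exp (r / 2) := by
    simpa using Real.pow_div_factorial_le_exp (r / 2) (by positivity) 2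
  have hnorm : ‖obliqueRay 3 r‖ ^ 2 ≤ 25 * Real.exp (r / 2) := by
    rw [Complex.sq_norm, Complex.normSq_apply, obliqueRay_re, obliqueRay_im]
    nlinarith
  calc ‖obliqueRay 3 r‖ ^ 2 * Real.exp (3 - r) ≤ 25 * Real.exp (r / 2) * Real.exp (3 - r) := by
        gcongr
    _ = 25 * Real.exp 3 * Real.exp (-(1 / 2) * r) := by
        rw [mul_assoc, mul_assoc, ← Real.exp_add, ← Real.exp_add]
        ring_nf

lemma norm_exp_mul_mittagLefflerRemainderDeriv_le (hlam : 0 < lam) (ht : 1 ≤ t)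
    (hρ : ρ ∈ Icc (0 : ℝ) 1) {r : ℝ} (hr : 0 ≤ r) :
    ‖Complex.exp (obliqueRay 3 r) * mittagLefflerRemainderDeriv lam t ρ (obliqueRay 3 r)‖ ≤
      (1 + Real.log t) / (lam * t ^ ρ) ^ 2 * (600 * Real.exp 3 * Real.exp (-(1 / 2) * r)) := by
  have hcoef : 0 ≤ (1 + Real.log t) / (lam * t ^ ρ) ^ 2 :=
    div_nonneg (by linarith [Real.log_nonneg ht]) (sq_nonneg _)
  have hderiv := norm_mittagLefflerRemainderDeriv_le hlam ht hρ
    (obliqueRay_mem_obliqueHalfPlane (by norm_num : (2 : ℝ) < 3) r)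
  rw [norm_mul, norm_exp_obliqueRay, mul_comm]
  calc _ ≤ 24 * ((1 + Real.log t) / (lam * t ^ ρ) ^ 2) * ‖obliqueRay 3 r‖ ^ 2 *
        Real.exp (3 - r) := by gcongr
    _ = (1 + Real.log t) / (lam * t ^ ρ) ^ 2 *
        (24 * (‖obliqueRay 3 r‖ ^ 2 * Real.exp (3 - r))) := by ring
    _ ≤ _ := mul_le_mul_of_nonneg_left (by linarith [norm_sq_obliqueRay_mul_exp_le hr]) hcoef

lemma hasDerivAt_hankelIntegral_mittagLefflerRemainder (hlam : 0 < lam) (ht : 1 ≤ t)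
    (hρ : ρ ∈ Ioo (0 : ℝ) 1) :
    HasDerivAt (fun ρ => hankelIntegral (mittagLefflerRemainder ρ (lam * t ^ ρ)) 3)
      (hankelIntegral (mittagLefflerRemainderDeriv lam t ρ) 3) ρ := by
  have ht0 : 0 < t := one_pos.trans_le ht
  have hintegrable : ∀ s ∈ Ioo (0 : ℝ) 1, IntegrableOn (fun r => Complex.exp (obliqueRay 3 r) *
      mittagLefflerRemainder s (lam * t ^ s) (obliqueRay 3 r)) (Ioi 0) := fun s hs =>
    (hankelAdmissible_mittagLefflerRemainder (Ioo_subset_Icc_self hs)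
      (mul_pos hlam (Real.rpow_pos_of_pos ht0 s))).integrableOn three_pos
  have hmeas : Measurable fun r =>
      Complex.exp (obliqueRay 3 r) * mittagLefflerRemainderDeriv lam t ρ (obliqueRay 3 r) := by
    have := (continuous_obliqueRay 3).measurable
    unfold mittagLefflerRemainderDeriv scaledPow
    fun_prop
  refine ((hasDerivAt_integral_of_dominated_loc_of_deriv_le (μ := volume.restrict (Ioi 0))
    (F := fun s r => Complex.exp (obliqueRay 3 r) *
      mittagLefflerRemainder s (lam * t ^ s) (obliqueRay 3 r))
    (F' := fun s r => Complex.exp (obliqueRay 3 r) *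
      mittagLefflerRemainderDeriv lam t s (obliqueRay 3 r))
    (bound := fun r => (1 + Real.log t) / lam ^ 2 *
      (600 * Real.exp 3 * Real.exp (-(1 / 2) * r)))
    (Ioo_mem_nhds hρ.1 hρ.2) ?_ (hintegrable ρ hρ) hmeas.aestronglyMeasurable
    (ae_restrict_of_forall_mem measurableSet_Ioi fun r hr s hs => ?_)
    (((exp_neg_integrableOn_Ioi 0 one_half_pos).const_mul _).const_mul _)
    (Eventually.of_forall fun r s hs => ?_)).2.const_mul obliqueDir).div_const (π : ℂ)
  · filter_upwards [Ioo_mem_nhds hρ.1 hρ.2] with s hs using (hintegrable s hs).aestronglyMeasurable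
  · refine (norm_exp_mul_mittagLefflerRemainderDeriv_le hlam ht (Ioo_subset_Icc_self hs)
      (le_of_lt hr)).trans ?_
    have hlogt : 0 ≤ Real.log t := Real.log_nonneg ht
    gcongr
    exact le_mul_of_one_le_right hlam.le (Real.one_le_rpow ht hs.1.le)
  · exact (hasDerivAt_mittagLefflerRemainder hlam ht0 (Ioo_subset_Icc_self hs)
      (obliqueRay_mem_obliqueHalfPlane three_pos r)).const_mul _

lemma exists_norm_hankelIntegral_mittagLefflerRemainderDeriv_le :
    ∃ K, ∀ ⦃lam t ρ : ℝ⦄, 0 < lam → 1 ≤ t → ρ ∈ Icc (0 : ℝ) 1 →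
      ‖hankelIntegral (mittagLefflerRemainderDeriv lam t ρ) 3‖ ≤
        K * ((1 + Real.log t) / (lam * t ^ ρ) ^ 2) := by
  refine ⟨‖obliqueDir‖ * (∫ r in Ioi (0 : ℝ), 600 * Real.exp 3 * Real.exp (-(1 / 2) * r)) / π,
    fun {lam t ρ} hlam ht hρ => ?_⟩
  have hnorm := norm_integral_le_of_norm_le
    (((exp_neg_integrableOn_Ioi 0 one_half_pos).const_mul (600 * Real.exp 3)).const_mul
      ((1 + Real.log t) / (lam * t ^ ρ) ^ 2))
    (ae_restrict_of_forall_mem measurableSet_Ioi fun r hr =>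
      norm_exp_mul_mittagLefflerRemainderDeriv_le hlam ht hρ (le_of_lt hr))
  rw [integral_const_mul] at hnorm
  rw [hankelIntegral, norm_div, norm_mul, Complex.norm_real, Real.norm_of_nonneg pi_pos.le,
    div_mul_eq_mul_div, mul_assoc, mul_comm (∫ r in Ioi (0 : ℝ), _)]
  gcongr

end DerivativeInOrder

section MonotoneInOrder

variable {lam t ρ : ℝ}

lemma hasDerivAt_inv_mul_inv_Gamma_one_sub (hlam : lam ≠ 0) (ht : 0 < t) (hρ : ρ < 1) :
    HasDerivAt (fun ρ => (lam * t ^ ρ)⁻¹ * (Real.Gamma (1 - ρ))⁻¹)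
      ((lam * t ^ ρ)⁻¹ *
        (deriv Real.Gamma (1 - ρ) / Real.Gamma (1 - ρ) ^ 2 - Real.log t / Real.Gamma (1 - ρ)))
      ρ := by
  have hΓ0 : Real.Gamma (1 - ρ) ≠ 0 := (Real.Gamma_pos_of_pos (sub_pos.2 hρ)).ne'
  have hpow0 : t ^ ρ ≠ 0 := (Real.rpow_pos_of_pos ht ρ).ne'
  have hΓ : HasDerivAt (fun ρ => Real.Gamma (1 - ρ)) (-deriv Real.Gamma (1 - ρ)) ρ :=
    (differentiableAt_Gamma_of_pos (sub_pos.2 hρ)).hasDerivAt.comp_const_sub 1 ρ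
  have hpow : HasDerivAt (fun ρ => lam * t ^ ρ) (lam * (t ^ ρ * Real.log t)) ρ :=
    (Real.hasStrictDerivAt_const_rpow ht ρ).hasDerivAt.const_mul lam
  refine ((hpow.inv (mul_ne_zero hlam hpow0)).mul (hΓ.inv hΓ0)).congr_deriv ?_
  simp only [Pi.inv_apply]
  field_simp
  ring

lemma deriv_Gamma_div_sq_sub_log_div_le_neg_one (ht : Real.exp 1 ≤ t) (hρ : ρ ∈ Ico (0 : ℝ) 1) :
    deriv Real.Gamma (1 - ρ) / Real.Gamma (1 - ρ) ^ 2 - Real.log t / Real.Gamma (1 - ρ) ≤ -1 := by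
  have hΓ : 0 < Real.Gamma (1 - ρ) := Real.Gamma_pos_of_pos (sub_pos.2 hρ.2)
  have hlog : 1 ≤ Real.log t := (Real.le_log_iff_exp_le ((Real.exp_pos 1).trans_le ht)).2 ht
  have hderiv := deriv_Gamma_le_of_mem_Ioc (y := 1 - ρ) ⟨sub_pos.2 hρ.2, by linarith [hρ.1]⟩
  calc deriv Real.Gamma (1 - ρ) / Real.Gamma (1 - ρ) ^ 2 - Real.log t / Real.Gamma (1 - ρ)
      ≤ (1 - Real.Gamma (1 - ρ)) * Real.Gamma (1 - ρ) / Real.Gamma (1 - ρ) ^ 2 -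
          1 / Real.Gamma (1 - ρ) := by gcongr
    _ = -1 := by
        field_simp
        ring

theorem hasDerivAt_mittagLeffler_neg (hlam : 0 < lam) (ht : 1 ≤ t) (hρ : ρ ∈ Ioo (0 : ℝ) 1) :
    HasDerivAt (fun ρ => mittagLeffler ρ (-(lam * t ^ ρ)))
      ((lam * t ^ ρ)⁻¹ *
        (deriv Real.Gamma (1 - ρ) / Real.Gamma (1 - ρ) ^ 2 - Real.log t / Real.Gamma (1 - ρ)) -
        (hankelIntegral (mittagLefflerRemainderDeriv lam t ρ) 3).im) ρ := by
  have ht0 : 0 < t := one_pos.trans_le ht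
  have hremainder := Complex.imCLM.hasFDerivAt.comp_hasDerivAt ρ
    (hasDerivAt_hankelIntegral_mittagLefflerRemainder hlam ht hρ)
  refine ((hasDerivAt_inv_mul_inv_Gamma_one_sub hlam.ne' ht0 hρ.2).sub
    hremainder).congr_of_eventuallyEq ?_
  filter_upwards [Ioo_mem_nhds hρ.1 hρ.2] with s hs
  exact mittagLeffler_neg_eq_sub_remainder hs (mul_pos hlam (Real.rpow_pos_of_pos ht0 s)) three_pos

theorem exists_forall_deriv_mittagLeffler_lt_zero :
    ∃ K, ∀ ⦃lam t ρ : ℝ⦄, 0 < lam → Real.exp 1 ≤ t → ρ ∈ Ioo (0 : ℝ) 1 →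
      K * (1 + Real.log t) < lam * t ^ ρ →
        deriv (fun ρ => mittagLeffler ρ (-(lam * t ^ ρ))) ρ < 0 := by
  obtain ⟨K, hK⟩ := exists_norm_hankelIntegral_mittagLefflerRemainderDeriv_le
  refine ⟨K, fun {lam t ρ} hlam ht hρ hlarge => ?_⟩
  have ht1 : 1 ≤ t := (Real.one_le_exp zero_le_one).trans ht
  have hx : 0 < lam * t ^ ρ := mul_pos hlam (Real.rpow_pos_of_pos (one_pos.trans_le ht1) ρ)
  have hlead : (lam * t ^ ρ)⁻¹ * (deriv Real.Gamma (1 - ρ) / Real.Gamma (1 - ρ) ^ 2 -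
      Real.log t / Real.Gamma (1 - ρ)) ≤ (lam * t ^ ρ)⁻¹ * -1 :=
    mul_le_mul_of_nonneg_left
      (deriv_Gamma_div_sq_sub_log_div_le_neg_one ht (Ioo_subset_Ico_self hρ)) (inv_pos.2 hx).le
  have hrem : |(hankelIntegral (mittagLefflerRemainderDeriv lam t ρ) 3).im| < (lam * t ^ ρ)⁻¹ :=
    calc _ ≤ K * ((1 + Real.log t) / (lam * t ^ ρ) ^ 2) :=
          (Complex.abs_im_le_norm _).trans (hK hlam ht1 (Ioo_subset_Icc_self hρ))
      _ = K * (1 + Real.log t) / (lam * t ^ ρ) ^ 2 := (mul_div_assoc _ _ _).symm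
      _ < lam * t ^ ρ / (lam * t ^ ρ) ^ 2 := by gcongr
      _ = (lam * t ^ ρ)⁻¹ := by rw [sq, div_mul_cancel_left₀ hx.ne']
  rw [(hasDerivAt_mittagLeffler_neg hlam ht1 hρ).deriv]
  linarith [neg_abs_le (hankelIntegral (mittagLefflerRemainderDeriv lam t ρ) 3).im]

lemma eventually_mul_one_add_log_lt_rpow (K : ℝ) {ρ₀ : ℝ} (hlam : 0 < lam) (hρ₀ : 0 < ρ₀) :
    ∀ᶠ t in atTop, K * (1 + Real.log t) < lam * t ^ ρ₀ := by
  have hlittle : (fun t => K * (1 + Real.log t)) =o[atTop] fun t => t ^ ρ₀ :=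
    ((Asymptotics.isLittleO_const_left.2 (Or.inr (tendsto_abs_atTop_atTop.comp
      (tendsto_rpow_atTop hρ₀)))).add (isLittleO_log_rpow_atTop hρ₀)).const_mul_left K
  filter_upwards [hlittle.def (half_pos hlam), eventually_gt_atTop 0] with t ht ht0
  have hpow : 0 < t ^ ρ₀ := Real.rpow_pos_of_pos ht0 ρ₀
  rw [Real.norm_of_nonneg hpow.le] at ht
  calc K * (1 + Real.log t) ≤ lam / 2 * t ^ ρ₀ := (le_abs_self _).trans ht
    _ < lam * t ^ ρ₀ := mul_lt_mul_of_pos_right (half_lt_self hlam) hpow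

theorem eventually_strictAntiOn_mittagLeffler_neg {ρ₀ : ℝ} (hlam : 0 < lam) (hρ₀ : 0 < ρ₀) :
    ∀ᶠ t in atTop, StrictAntiOn (fun ρ => mittagLeffler ρ (-(lam * t ^ ρ))) (Ico ρ₀ 1) := by
  obtain ⟨K, hK⟩ := exists_forall_deriv_mittagLeffler_lt_zero
  filter_upwards [eventually_mul_one_add_log_lt_rpow K hlam hρ₀,
    eventually_ge_atTop (Real.exp 1)] with t hlarge ht
  have hderiv : ∀ ρ ∈ Ico ρ₀ 1, deriv (fun ρ => mittagLeffler ρ (-(lam * t ^ ρ))) ρ < 0 :=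
    fun ρ hρ => hK hlam ht ⟨hρ₀.trans_le hρ.1, hρ.2⟩ <| hlarge.trans_le <|
      mul_le_mul_of_nonneg_left (Real.rpow_le_rpow_of_exponent_le
        ((Real.one_le_exp zero_le_one).trans ht) hρ.1) hlam.le
  exact strictAntiOn_of_deriv_neg (convex_Ico ρ₀ 1)
    (fun ρ hρ => (differentiableAt_of_deriv_ne_zero
      (hderiv ρ hρ).ne).continuousAt.continuousWithinAt)
    fun ρ hρ => hderiv ρ (interior_subset hρ)

end MonotoneInOrder

/-- For `0 < ρ₀ < 1` and `λ₀ > 0` there is `T₀ = T₀(λ₀, ρ₀) > 0` such that for all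
`t₀ ≥ T₀` and every constant `c ≥ 0`, the function `U(t₀, ρ) = c·E_ρ(−λ₀ t₀^ρ)` is
monotonically decreasing in `ρ` on `[ρ₀, 1)`, strictly so when `c > 0`. -/
theorem stmt1 (ρ₀ lam₀ : ℝ) (hρ₀ : 0 < ρ₀) (hρ₀' : ρ₀ < 1) (hlam₀ : 0 < lam₀) :
    ∃ T₀ : ℝ, 0 < T₀ ∧
      ∀ t₀ : ℝ, T₀ ≤ t₀ → ∀ c : ℝ, 0 ≤ c →
        AntitoneOn (fun ρ : ℝ => c * mittagLeffler ρ (-(lam₀ * t₀ ^ ρ))) (Set.Ico ρ₀ 1) ∧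
        (0 < c →
          StrictAntiOn (fun ρ : ℝ => c * mittagLeffler ρ (-(lam₀ * t₀ ^ ρ)))
            (Set.Ico ρ₀ 1)) := by
  obtain ⟨T, hT⟩ := eventually_atTop.1 (eventually_strictAntiOn_mittagLeffler_neg hlam₀ hρ₀)
  refine ⟨max T 1, by positivity, fun t₀ ht₀ c hc => ?_⟩
  have hanti := hT t₀ ((le_max_left T 1).trans ht₀)
  exact ⟨fun _ ha _ hb hab => mul_le_mul_of_nonneg_left (hanti.antitoneOn ha hb hab) hc,
    fun hc' _ ha _ hb hab => mul_lt_mul_of_pos_left (hanti ha hb hab) hc'⟩
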